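/- arXiv:2512.23403 — 2 statements merged into one kernel-verified Lean document; each statement's English description precedes it below -/
import Mathlib

section
/- Let A be a one-register alternating finite-memory automaton over an infinite alphabet Σ with distinguished letters Δ. Let σ = τυφ ∈ L(A) with |υ| > 0, let C_0, C_1, …, C_{|σ|} be an accepting run of A on σ, and let α be a Δ-permutation of Σ and Σ′ ⊆ Σ be such that C_{|τυ|}, α(Σ′) ⪯_α C_{|τ|}, Σ′, α(Σ′) ⊆ Σ′, and [υφ] ⊆ Σ′. Then for every k ≥ 1 the word τ υ α(υ) α²(υ) ⋯ α^k(υ) α^k(φ) belongs to L(A). -/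
/-- A one-register alternating finite-memory automaton over the alphabet `Sigma`,
with states `S`. -/
structure AFMA (Sigma : Type) (S : Type) where
  s0 : S
  F : Set S
  Δ : Finset Sigma
  θ0 : Sigma
  θ0_notin : θ0 ∉ Δ
  μΔ : S → Sigma → Set (Set S)
  μeq : S → Set (Set S)
  μne : S → Set (Set S × Set S)

namespace AFMA

variable {Sigma S : Type}

open Classical

/-- The induced transition function `μ^c` on a configuration `c` and a letter `σ`:
a set of sets of configurations. -/
noncomputable def muC (A : AFMA Sigma S) (c : S × Sigma) (σ : Sigma) : Set (Set (S × Sigma)) :=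
  if σ ∈ A.Δ then {D | ∃ Q ∈ A.μΔ c.1 σ, D = Q ×ˢ ({c.2} : Set Sigma)}
  else if σ = c.2 then {D | ∃ Q ∈ A.μeq c.1, D = Q ×ˢ ({c.2} : Set Sigma)}
  else {D | ∃ p ∈ A.μne c.1, D = p.1 ×ˢ ({c.2} : Set Sigma) ∪ p.2 ×ˢ ({σ} : Set Sigma)}

/-- `SetStep A C σ C'` : `C' ∈ μ^c(C, σ)`, i.e. `C'` is a union, over all `c ∈ C`,
of chosen elements of `μ^c(c, σ)`. -/
def SetStep (A : AFMA Sigma S) (C : Set (S × Sigma)) (σ : Sigma)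
    (C' : Set (S × Sigma)) : Prop :=
  ∃ g : S × Sigma → Set (S × Sigma),
    (∀ c ∈ C, g c ∈ A.muC c σ) ∧ C' = ⋃ c ∈ C, g c

/-- `Steps A C w C'` : reading the word `w` from the configuration set `C`
the automaton can reach the configuration set `C'`. -/
inductive Steps (A : AFMA Sigma S) :
    Set (S × Sigma) → List Sigma → Set (S × Sigma) → Prop
  | nil (C) : Steps A C [] C
  | cons {C C' C'' σ w} : A.SetStep C σ C' → Steps A C' w C'' → Steps A C (σ :: w) C''

/-- A set of configurations is accepting if all its states are accepting. -/
def Accepting (A : AFMA Sigma S) (C : Set (S × Sigma)) : Prop :=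
  ∀ c ∈ C, c.1 ∈ A.F

/-- The language accepted by `A`. -/
def Lang (A : AFMA Sigma S) : Set (List Sigma) :=
  {w | ∃ C, A.Steps {(A.s0, A.θ0)} w C ∧ A.Accepting C}

/-- The action of a permutation of the alphabet on a set of configurations. -/
def mapConfigs (α : Equiv.Perm Sigma) (C : Set (S × Sigma)) : Set (S × Sigma) :=
  (fun c => (c.1, α c.2)) '' C

end AFMA

/-- A `Δ`-permutation of the alphabet: a bijection fixing every distinguished letter. -/
def IsDeltaPerm {Sigma : Type} (Δ : Finset Sigma) (α : Equiv.Perm Sigma) : Prop :=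
  ∀ δ ∈ Δ, α δ = δ

namespace AFMA

variable {Sigma S : Type}

/-- `Σ(C)` : the set of (non-distinguished) letters occurring in configurations of `C`. -/
def lettersOf (Δ : Finset Sigma) (C : Set (S × Sigma)) : Set Sigma :=
  {σ | σ ∉ Δ ∧ ∃ s, (s, σ) ∈ C}

/-- `S^σ(C)` : the states paired with the letter `σ` in `C`. -/
def statesAt (C : Set (S × Sigma)) (σ : Sigma) : Set S :=
  {s | (s, σ) ∈ C}

/-- `S^{Γ}(C)` : the states paired with some letter of `Γ` in `C`. -/
def statesOn (C : Set (S × Sigma)) (Γ : Set Sigma) : Set S :=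
  ⋃ σ ∈ Γ, statesAt C σ

/-- `Σ^Q(C)` : the letters `σ` with `S^σ(C) = Q`. -/
def lettersWith (C : Set (S × Sigma)) (Q : Set S) : Set Sigma :=
  {σ | statesAt C σ = Q}

/-- The relation `C1,Γ1 ⪯_α C2,Γ2`. -/
def Preceq (Δ : Finset Sigma) (α : Equiv.Perm Sigma)
    (C1 : Set (S × Sigma)) (Γ1 : Set Sigma)
    (C2 : Set (S × Sigma)) (Γ2 : Set Sigma) : Prop :=
  Γ1 ⊆ ⇑α '' Γ2 ∧
  (⇑α '' Γ2) ∩ lettersOf Δ C1 ⊆ Γ1 ∧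
  (∀ σ ∈ Γ1, statesAt C1 σ ⊆ statesAt C2 (α⁻¹ σ)) ∧
  statesOn C1 Γ1ᶜ ⊆ statesOn C2 Γ2ᶜ

end AFMA

/-- The `k`-fold pumping `τ υ α(υ) α²(υ) ⋯ α^k(υ) α^k(φ)` of the decomposition
`τ ++ υ ++ φ` by the permutation `α`. -/
def pumpedWord {Sigma : Type} (α : Equiv.Perm Sigma) (τ υ φ : List Sigma) (k : ℕ) :
    List Sigma :=
  τ ++ υ ++ ((List.range k).flatMap fun i => υ.map ⇑(α ^ (i + 1))) ++ φ.map ⇑(α ^ k)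

/-!
Two registers holding `x` and `y` cannot be told apart by letters of `Γ`, up to `α`, if reading
`α σ` against `x` and reading `σ` against `y` always give the same outcome of the equality test.
The relation `C₁, α(Γ) ⪯_α C₂, Γ` says that every configuration of `C₁` has such a partner in `C₂`
with the same state, and this is preserved when `C₂` reads `σ ∈ Γ` and `C₁` reads `α σ`. Hence
`C_{|τυ|}` can repeat as `α(υ)` and `α(φ)` what `C_{|τ|}` does on `υ` and `C_{|τυ|}` does on `φ`,
and the configuration set reached after `α(υ)` stands in the same relation to `C_{|τυ|}`, so the
repetition can go on forever.
-/

namespace IsDeltaPerm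

theorem apply_mem_iff {Sigma : Type} {Δ : Finset Sigma} {α : Equiv.Perm Sigma}
    (hα : IsDeltaPerm Δ α) {σ : Sigma} : α σ ∈ Δ ↔ σ ∈ Δ := by
  refine ⟨fun h => ?_, fun h => (hα σ h).symm ▸ h⟩
  rwa [← α.injective (hα (α σ) h)]

end IsDeltaPerm

namespace AFMA

variable {Sigma S : Type} {A : AFMA Sigma S} {α : Equiv.Perm Sigma} {Γ : Set Sigma}

section Runs

/-- `Cs 0, …, Cs w.length` is a run on the word `w`, starting from an arbitrary configuration set;
the values of `Cs` past `w.length` are irrelevant. -/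
def IsRun (A : AFMA Sigma S) (Cs : ℕ → Set (S × Sigma)) (w : List Sigma) : Prop :=
  ∀ i (h : i < w.length), A.SetStep (Cs i) (w.get ⟨i, h⟩) (Cs (i + 1))

/-- The automaton, started in the configuration set `C`, accepts the word `w`. Membership in
`A.Lang` is the case where `C` is the initial configuration. -/
def AcceptsFrom (A : AFMA Sigma S) (C : Set (S × Sigma)) (w : List Sigma) : Prop :=
  ∃ E, A.Steps C w E ∧ A.Accepting E

theorem IsRun.left {Cs : ℕ → Set (S × Sigma)} {v w : List Sigma}
    (h : A.IsRun Cs (v ++ w)) : A.IsRun Cs v := by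
  intro i hi
  simpa [List.getElem_append_left hi] using h i (by rw [List.length_append]; lia)

theorem IsRun.right {Cs : ℕ → Set (S × Sigma)} {v w : List Sigma}
    (h : A.IsRun Cs (v ++ w)) : A.IsRun (fun i => Cs (v.length + i)) w := by
  intro i hi
  simpa [Nat.add_assoc] using h (v.length + i) (by rw [List.length_append]; lia)

theorem IsRun.steps {Cs : ℕ → Set (S × Sigma)} {w : List Sigma} (h : A.IsRun Cs w) :
    A.Steps (Cs 0) w (Cs w.length) := by
  induction w generalizing Cs with
  | nil => exact .nil _
  | cons a w ih => exact .cons (h 0 (by simp)) (ih fun i hi => h (i + 1) (Nat.succ_lt_succ hi))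

theorem IsRun.steps_right {Cs : ℕ → Set (S × Sigma)} {v w : List Sigma}
    (h : A.IsRun Cs (v ++ w)) : A.Steps (Cs v.length) w (Cs (v ++ w).length) := by
  simpa using h.right.steps

theorem Steps.acceptsFrom_append {C D : Set (S × Sigma)} {v w : List Sigma}
    (hv : A.Steps C v D) (hw : A.AcceptsFrom D w) : A.AcceptsFrom C (v ++ w) := by
  induction hv with
  | nil => exact hw
  | cons hstep _ ih =>
    obtain ⟨E, hE, hacc⟩ := ih hw
    exact ⟨E, .cons hstep hE, hacc⟩

end Runs

section Simulation

/-- The register contents `x` and `y` pass the same equality tests against letters of `Γ`, when the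
letters compared with `x` are renamed by `α`. Equivalently, either `y ∈ Γ` and `x = α y`, or
`y ∉ Γ` and `x ∉ α(Γ)`. -/
def RegistersAgree (α : Equiv.Perm Sigma) (Γ : Set Sigma) (x y : Sigma) : Prop :=
  ∀ σ ∈ Γ, α σ = x ↔ σ = y

/-- Every configuration of `C` has a counterpart in `D` with the same state and an agreeing
register. This is `C, α(Γ) ⪯_α D, Γ`, written configuration by configuration. -/
def Simulates (α : Equiv.Perm Sigma) (Γ : Set Sigma) (C D : Set (S × Sigma)) : Prop :=
  ∀ s x, (s, x) ∈ C → ∃ y, (s, y) ∈ D ∧ RegistersAgree α Γ x y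

theorem registersAgree_apply (α : Equiv.Perm Sigma) (Γ : Set Sigma) (y : Sigma) :
    RegistersAgree α Γ (α y) y :=
  fun _ _ => α.injective.eq_iff

theorem registersAgree_of_notMem {x y : Sigma} (hx : x ∉ α '' Γ) (hy : y ∉ Γ) :
    RegistersAgree α Γ x y :=
  fun σ hσ => iff_of_false (fun h => hx ⟨σ, hσ, h⟩) (ne_of_mem_of_not_mem hσ hy)

theorem Preceq.simulates {Δ : Finset Sigma} {C D : Set (S × Sigma)}
    (h : Preceq Δ α C (α '' Γ) D Γ) : Simulates α Γ C D := by
  obtain ⟨-, -, hin, hout⟩ := h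
  intro s x hs
  by_cases hx : x ∈ α '' Γ
  · have hsD : (s, α⁻¹ x) ∈ D := hin x hx hs
    exact ⟨α⁻¹ x, hsD, by simpa using registersAgree_apply α Γ (α⁻¹ x)⟩
  · obtain ⟨y, hy, hsD⟩ := Set.mem_iUnion₂.1 (hout (Set.mem_biUnion hx hs))
    exact ⟨y, hsD, registersAgree_of_notMem hx hy⟩

theorem RegistersAgree.simulates_prod {x y : Sigma} (h : RegistersAgree α Γ x y) (Q : Set S) :
    Simulates α Γ (Q ×ˢ {x}) (Q ×ˢ {y}) := by
  rintro s _ ⟨hs, rfl⟩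
  exact ⟨y, ⟨hs, rfl⟩, h⟩

theorem Simulates.mono_right {C D D' : Set (S × Sigma)} (h : Simulates α Γ C D) (hD : D ⊆ D') :
    Simulates α Γ C D' := fun s x hs =>
  let ⟨y, hy, hxy⟩ := h s x hs
  ⟨y, hD hy, hxy⟩

theorem Simulates.union {C C' D D' : Set (S × Sigma)} (h : Simulates α Γ C D)
    (h' : Simulates α Γ C' D') : Simulates α Γ (C ∪ C') (D ∪ D') := fun s x hs =>
  hs.elim (h.mono_right Set.subset_union_left s x) (h'.mono_right Set.subset_union_right s x)

theorem Simulates.accepting {C D : Set (S × Sigma)} (h : Simulates α Γ C D)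
    (hD : A.Accepting D) : A.Accepting C := fun c hc =>
  let ⟨y, hy, _⟩ := h c.1 c.2 hc
  hD (c.1, y) hy

theorem RegistersAgree.exists_muC_simulates (hα : IsDeltaPerm A.Δ α) {s : S} {x y σ : Sigma}
    (hxy : RegistersAgree α Γ x y) (hσ : σ ∈ Γ) {D : Set (S × Sigma)} (hD : D ∈ A.muC (s, y) σ) :
    ∃ E ∈ A.muC (s, x) (α σ), Simulates α Γ E D := by
  rw [muC] at hD
  split_ifs at hD with hΔ hy
  · obtain ⟨Q, hQ, rfl⟩ := hD
    rw [muC, if_pos (hα.apply_mem_iff.2 hΔ)]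
    exact ⟨_, ⟨Q, by rwa [hα σ hΔ], rfl⟩, hxy.simulates_prod Q⟩
  · obtain ⟨Q, hQ, rfl⟩ := hD
    rw [muC, if_neg (mt hα.apply_mem_iff.1 hΔ), if_pos ((hxy σ hσ).2 hy)]
    exact ⟨_, ⟨Q, hQ, rfl⟩, hxy.simulates_prod Q⟩
  · obtain ⟨⟨Q, Q'⟩, hQ, rfl⟩ := hD
    rw [muC, if_neg (mt hα.apply_mem_iff.1 hΔ), if_neg (mt (hxy σ hσ).1 hy)]
    exact ⟨_, ⟨(Q, Q'), hQ, rfl⟩,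
      (hxy.simulates_prod Q).union ((registersAgree_apply α Γ σ).simulates_prod Q')⟩

theorem Simulates.exists_setStep (hα : IsDeltaPerm A.Δ α) {C D D' : Set (S × Sigma)}
    (h : Simulates α Γ C D) {σ : Sigma} (hσ : σ ∈ Γ) (hstep : A.SetStep D σ D') :
    ∃ C', A.SetStep C (α σ) C' ∧ Simulates α Γ C' D' := by
  obtain ⟨g, hg, rfl⟩ := hstep
  have hchoice : ∀ c ∈ C, ∃ E ∈ A.muC c (α σ), Simulates α Γ E (⋃ d ∈ D, g d) := by
    rintro ⟨s, x⟩ hc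
    obtain ⟨y, hd, hxy⟩ := h s x hc
    obtain ⟨E, hE, hsim⟩ := hxy.exists_muC_simulates hα hσ (hg (s, y) hd)
    exact ⟨E, hE, hsim.mono_right (Set.subset_biUnion_of_mem hd)⟩
  choose! f hf hsim using hchoice
  refine ⟨⋃ c ∈ C, f c, ⟨f, hf, rfl⟩, fun s x hs => ?_⟩
  obtain ⟨c, hc, hs⟩ := Set.mem_iUnion₂.1 hs
  exact hsim c hc s x hs

theorem Simulates.exists_steps (hα : IsDeltaPerm A.Δ α) {C D D' : Set (S × Sigma)}
    (h : Simulates α Γ C D) {w : List Sigma} (hw : ∀ σ ∈ w, σ ∈ Γ) (hsteps : A.Steps D w D') :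
    ∃ C', A.Steps C (w.map α) C' ∧ Simulates α Γ C' D' := by
  induction hsteps generalizing C with
  | nil => exact ⟨C, .nil C, h⟩
  | cons hstep _ ih =>
    obtain ⟨hσ, hw⟩ := List.forall_mem_cons.1 hw
    obtain ⟨C₁, hC₁, hsim₁⟩ := h.exists_setStep hα hσ hstep
    obtain ⟨C', hC', hsim'⟩ := ih hsim₁ hw
    exact ⟨C', .cons hC₁ hC', hsim'⟩

theorem Simulates.acceptsFrom_map (hα : IsDeltaPerm A.Δ α) {C D : Set (S × Sigma)}
    (h : Simulates α Γ C D) {w : List Sigma} (hw : ∀ σ ∈ w, σ ∈ Γ) (hacc : A.AcceptsFrom D w) :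
    A.AcceptsFrom C (w.map α) := by
  obtain ⟨E, hE, hEacc⟩ := hacc
  obtain ⟨E', hE', hsim⟩ := h.exists_steps hα hw hE
  exact ⟨E', hE', hsim.accepting hEacc⟩

end Simulation

end AFMA

section Pumping

variable {Sigma S : Type} {A : AFMA Sigma S} {α : Equiv.Perm Sigma} {Γ : Set Sigma}

/-- The part `α(υ) α²(υ) ⋯ α^k(υ) α^k(φ)` of the pumped word that is read after `τυ`. -/
def pumpedSuffix (α : Equiv.Perm Sigma) (υ φ : List Sigma) (k : ℕ) : List Sigma :=
  ((List.range k).flatMap fun i => υ.map ⇑(α ^ (i + 1))) ++ φ.map ⇑(α ^ k)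

theorem pumpedWord_eq_append_pumpedSuffix (α : Equiv.Perm Sigma) (τ υ φ : List Sigma) (k : ℕ) :
    pumpedWord α τ υ φ k = τ ++ (υ ++ pumpedSuffix α υ φ k) := by
  simp only [pumpedWord, pumpedSuffix, List.append_assoc]

theorem pumpedSuffix_zero (α : Equiv.Perm Sigma) (υ φ : List Sigma) :
    pumpedSuffix α υ φ 0 = φ := by
  simp [pumpedSuffix]

theorem pumpedSuffix_succ (α : Equiv.Perm Sigma) (υ φ : List Sigma) (k : ℕ) :
    pumpedSuffix α υ φ (k + 1) = υ.map α ++ pumpedSuffix α (υ.map α) (φ.map α) k := by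
  simp [pumpedSuffix, List.range_succ_eq_map, List.flatMap_map, pow_succ, Equiv.Perm.coe_mul]

theorem forall_mem_map_of_mapsTo (hΓ : Set.MapsTo α Γ Γ) {w : List Sigma}
    (hw : ∀ σ ∈ w, σ ∈ Γ) : ∀ σ ∈ w.map α, σ ∈ Γ :=
  List.forall_mem_map.2 fun σ hσ => hΓ (hw σ hσ)

theorem AFMA.Simulates.acceptsFrom_pumpedSuffix (hα : IsDeltaPerm A.Δ α) (hΓ : Set.MapsTo α Γ Γ)
    {C D : Set (S × Sigma)} (hsim : AFMA.Simulates α Γ D C) {υ φ : List Sigma}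
    (hυΓ : ∀ σ ∈ υ, σ ∈ Γ) (hφΓ : ∀ σ ∈ φ, σ ∈ Γ) (hυ : A.Steps C υ D)
    (hφ : A.AcceptsFrom D φ) (k : ℕ) : A.AcceptsFrom D (pumpedSuffix α υ φ k) := by
  induction k generalizing C D υ φ with
  | zero => rwa [pumpedSuffix_zero]
  | succ k ih =>
    obtain ⟨D', hυ', hsim'⟩ := hsim.exists_steps hα hυΓ hυ
    have hφ' : A.AcceptsFrom D' (φ.map α) := hsim'.acceptsFrom_map hα hφΓ hφ
    rw [pumpedSuffix_succ]
    exact hυ'.acceptsFrom_append <| ih hsim' (forall_mem_map_of_mapsTo hΓ hυΓ)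
      (forall_mem_map_of_mapsTo hΓ hφΓ) hυ' hφ'

theorem afma_pumping_of_preceq_general {τ υ φ : List Sigma} {C D : Set (S × Sigma)}
    (hτ : A.Steps {(A.s0, A.θ0)} τ C) (hυ : A.Steps C υ D) (hφ : A.AcceptsFrom D φ)
    (hα : IsDeltaPerm A.Δ α) (hpre : AFMA.Preceq A.Δ α D (⇑α '' Γ) C Γ) (hsub : ⇑α '' Γ ⊆ Γ)
    (hletters : ∀ x ∈ υ ++ φ, x ∈ Γ) (k : ℕ) : pumpedWord α τ υ φ k ∈ A.Lang := by
  obtain ⟨hυΓ, hφΓ⟩ := List.forall_mem_append.1 hletters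
  have hsuffix : A.AcceptsFrom D (pumpedSuffix α υ φ k) :=
    hpre.simulates.acceptsFrom_pumpedSuffix hα (Set.mapsTo_iff_image_subset.2 hsub) hυΓ hφΓ hυ hφ k
  rw [pumpedWord_eq_append_pumpedSuffix]
  exact hτ.acceptsFrom_append (hυ.acceptsFrom_append hsuffix)

end Pumping

/-- Pumping from an accepting run satisfying the sufficient condition: if
`τυφ ∈ L(A)` via an accepting run `Cs` with
`C_{|τυ|}, α(Γ) ⪯_α C_{|τ|}, Γ`, `α(Γ) ⊆ Γ` and `[υφ] ⊆ Γ`, then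
`τ υ α(υ) α²(υ) ⋯ α^k(υ) α^k(φ) ∈ L(A)` for every `k ≥ 1`. -/
theorem afma_pumping_of_preceq {Sigma S : Type} [Infinite Sigma] [Fintype S]
    (A : AFMA Sigma S) (τ υ φ : List Sigma) (hυ : υ ≠ [])
    (Cs : ℕ → Set (S × Sigma))
    (h0 : Cs 0 = {(A.s0, A.θ0)})
    (hstep : ∀ i (h : i < (τ ++ υ ++ φ).length),
      A.SetStep (Cs i) ((τ ++ υ ++ φ).get ⟨i, h⟩) (Cs (i + 1)))
    (hacc : A.Accepting (Cs (τ ++ υ ++ φ).length))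
    (α : Equiv.Perm Sigma) (hα : IsDeltaPerm A.Δ α) (Γ : Set Sigma)
    (hpre : AFMA.Preceq A.Δ α (Cs (τ ++ υ).length) (⇑α '' Γ) (Cs τ.length) Γ)
    (hsub : ⇑α '' Γ ⊆ Γ)
    (hletters : ∀ x ∈ υ ++ φ, x ∈ Γ) :
    ∀ k : ℕ, 1 ≤ k → pumpedWord α τ υ φ k ∈ A.Lang := by
  have hrun : A.IsRun Cs (τ ++ υ ++ φ) := hstep
  exact fun k _ => afma_pumping_of_preceq_general (h0 ▸ hrun.left.left.steps)
    hrun.left.steps_right ⟨_, hrun.steps_right, hacc⟩ hα hpre hsub hletters k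
end

section
/- Let A be a one-register alternating finite-memory automaton over an infinite alphabet Σ with state set S and distinguished letters Δ. Let σ = σ1σ2⋯σm ∈ L(A), let C = C_0, C_1, …, C_m be an accepting run of A on σ, and suppose there are i < j ≤ m such that S_{σ,C,i} = S_{σ,C,j} and f_{σ,C,i}(Q) ≤ f_{σ,C,j}(Q) for every nonempty Q ⊆ S. Then there exists a Δ-permutation α of Σ such that, setting τ = σ1⋯σ_{m−j}, υ = σ_{m−j+1}⋯σ_{m−i}, and φ = σ_{m−i+1}⋯σ_m, for every k ≥ 1 the word τ υ α(υ) α²(υ) ⋯ α^k(υ) α^k(φ) belongs to L(A). -/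
/-!
Read `τ υ φ` along `C₀ → C₂ → C₁ → C`. The counting hypothesis matches the letters of `φ` stored in
`C₁` injectively with letters of `υ φ` stored in `C₂` with the same states, and `α` is chosen so
that it undoes this matching. Then `C₂` simulates `C₁` along `α`: as long as the input only uses
letters of `υ φ`, the automaton can copy on `α(u)` from `C₁` any run on `u` from `C₂`. In particular
`α(υ)` leads from `C₁` to a set simulated by `C₁` along `α`, and one iterates.

For the iteration, `α ^ k` must not bring an unmatched letter of `υ φ` back to a register. Since `Σ`
is infinite, `α` can send every unmatched letter onto an infinite chain of letters that never
returns to the finite set of letters in use.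
-/

section Injections

variable {X Y ι : Type*}

theorem exists_embedding_eqOn [Countable ι] [Infinite X] {s : Set ι} (hs : s.Finite) {f : ι → X}
    (hf : Set.InjOn f s) : ∃ c : ι ↪ X, Set.EqOn c f s := by
  obtain ⟨u, hu⟩ := exists_injective_nat ι
  let e : ι ↪ X := (Function.Embedding.mk u hu).trans (Infinite.natEmbedding X)
  have hlt : Cardinal.mk (e '' s) < Cardinal.mk X :=
    (Cardinal.lt_aleph0_iff_set_finite.2 (hs.image e)).trans_le (Cardinal.aleph0_le_mk X)
  obtain ⟨g, hg⟩ := Cardinal.extend_function_of_lt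
    ((Equiv.Set.image e s e.injective).symm.toEmbedding.trans ⟨s.domRestrict f, hf.injective⟩)
    hlt ⟨Equiv.refl X⟩
  refine ⟨e.trans g.toEmbedding, fun i hi => ?_⟩
  simpa [Set.domRestrict_apply] using hg (Equiv.Set.image e s e.injective ⟨i, hi⟩)

theorem exists_injOn_of_encard_fiber_le [Nonempty Y] {p : X → ι} {q : Y → ι} {s : Set X}
    {t : Set Y} (hs : s.Finite)
    (hle : ∀ x ∈ s, (s ∩ p ⁻¹' {p x}).encard ≤ (t ∩ q ⁻¹' {p x}).encard) :
    ∃ f : X → Y, Set.MapsTo f s t ∧ Set.InjOn f s ∧ Set.EqOn (q ∘ f) p s := by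
  have hfiber (i : ι) : ∃ f : X → Y, i ∈ p '' s →
      Set.MapsTo f (s ∩ p ⁻¹' {i}) (t ∩ q ⁻¹' {i}) ∧ Set.InjOn f (s ∩ p ⁻¹' {i}) := by
    by_cases hi : i ∈ p '' s
    · obtain ⟨x, hx, rfl⟩ := hi
      obtain ⟨f, hf⟩ := (hs.subset Set.inter_subset_left).exists_injOn_of_encard_le (hle x hx)
      exact ⟨f, fun _ => hf⟩
    · exact ⟨fun _ => Classical.arbitrary Y, fun h => absurd h hi⟩
  choose F hF using hfiber
  have hmaps {x : X} (hx : x ∈ s) : F (p x) x ∈ t ∩ q ⁻¹' {p x} :=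
    (hF _ ⟨x, hx, rfl⟩).1 ⟨hx, rfl⟩
  refine ⟨fun x => F (p x) x, fun x hx => (hmaps hx).1, fun x hx y hy hxy => ?_,
    fun x hx => (hmaps hx).2⟩
  have hp : p x = p y := by
    rw [← (hmaps hx).2, ← (hmaps hy).2]
    exact congrArg q hxy
  refine (hF _ ⟨x, hx, rfl⟩).2 ⟨hx, rfl⟩ ⟨hy, hp.symm⟩ ?_
  simpa only [hp] using hxy

theorem exists_perm_leftInvOn_escaping [Infinite X] {T : Finset X} {M : Set X} (hMT : M ⊆ T)
    {f : X → X} (hmaps : Set.MapsTo f M T) (hinj : Set.InjOn f M) :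
    ∃ π : Equiv.Perm X, Set.LeftInvOn π f M ∧
      ∀ x ∈ T, ∀ n : ℕ, (π ^ (n + 1)) x ∈ T → π x ∈ M := by
  classical
  obtain ⟨g, hg⟩ := Set.MapsTo.exists_equiv_extend_of_card_eq (α := T) (by simp)
    (s := Subtype.val ⁻¹' M) (f := f ∘ Subtype.val) (fun x hx => hmaps hx)
    (hinj.comp Subtype.val_injective.injOn fun _ hx => hx)
  obtain ⟨c, hc⟩ := exists_embedding_eqOn (ι := T × ℤ) (f := fun p => (p.1 : X))
    (Set.finite_univ.prod (Set.finite_singleton 0))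
    (fun p hp p' hp' h => Prod.ext (Subtype.ext h) (hp.2.trans hp'.2.symm))
  replace hc (t : T) : c (t, 0) = t := hc ⟨trivial, rfl⟩
  have hlevel_zero {p : T × ℤ} (hp : c p ∈ T) : p.2 = 0 := by
    rw [c.injective ((hc ⟨c p, hp⟩).symm : c p = c (⟨c p, hp⟩, 0))]
  -- Outside `M` the permutation climbs one level of `T × ℤ`; as it never descends, it cannot
  -- come back to `T`, which is level `0`.
  let ρ : Equiv.Perm (T × ℤ) :=
    Equiv.prodShear g.symm fun t => Equiv.addRight (if (g.symm t : X) ∈ M then 0 else 1)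
  let π : Equiv.Perm X := ρ.viaEmbedding c
  have hπ (p : T × ℤ) : π (c p) = c (ρ p) := ρ.viaEmbedding_apply c p
  have hπT (t : T) : π t = c (ρ (t, 0)) := by rw [← hπ, hc]
  have hπM {t : T} (ht : (g.symm t : X) ∈ M) : π t = g.symm t := by simpa [ρ, ht, hc] using hπT t
  refine ⟨π, fun m hm => ?_, fun x hx n hn => ?_⟩
  · have hgm : g.symm ⟨f m, hmaps hm⟩ = ⟨m, hMT hm⟩ :=
      g.symm_apply_eq.2 (Subtype.ext (hg ⟨m, hMT hm⟩ hm).symm)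
    simpa [hgm, hm] using hπM (t := ⟨f m, hmaps hm⟩)
  · by_contra hxM
    have hne : (g.symm ⟨x, hx⟩ : X) ∉ M := fun h => hxM (hπM h ▸ h)
    have hlevel (n : ℕ) : ∃ p : T × ℤ, 1 ≤ p.2 ∧ (π ^ (n + 1)) x = c p := by
      induction n with
      | zero => exact ⟨ρ (⟨x, hx⟩, 0), by simp [ρ, hne], by simpa using hπT ⟨x, hx⟩⟩
      | succ n ih =>
        obtain ⟨p, hp, hpx⟩ := ih
        refine ⟨ρ p, ?_, by rw [pow_succ', Equiv.Perm.mul_apply, hpx, hπ]⟩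
        exact hp.trans (le_add_of_nonneg_right (by split_ifs <;> decide))
    obtain ⟨p, hp, hpx⟩ := hlevel n
    have := hlevel_zero (hpx ▸ hn)
    omega

end Injections

namespace IsDeltaPerm

variable {Sigma : Type} {Δ : Finset Sigma} {α : Equiv.Perm Sigma}

theorem pow (h : IsDeltaPerm Δ α) (n : ℕ) : IsDeltaPerm Δ (α ^ n) :=
  fun δ hδ => Equiv.Perm.pow_apply_eq_self_of_apply_eq_self (h δ hδ) n

theorem apply_mem_iff_s13 (h : IsDeltaPerm Δ α) {x : Sigma} : α x ∈ Δ ↔ x ∈ Δ :=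
  ⟨fun hx => α.injective (h _ hx) ▸ hx, fun hx => (h x hx).symm ▸ hx⟩

end IsDeltaPerm

/-- The word `α(υ) α²(υ) ⋯ α^k(υ)` inserted by pumping `υ`. -/
def powerImages {Sigma : Type} (α : Equiv.Perm Sigma) (υ : List Sigma) (k : ℕ) : List Sigma :=
  (List.range k).flatMap fun i => υ.map ⇑(α ^ (i + 1))

theorem powerImages_succ {Sigma : Type} (α : Equiv.Perm Sigma) (υ : List Sigma) (k : ℕ) :
    powerImages α υ (k + 1) = powerImages α υ k ++ υ.map ⇑(α ^ (k + 1)) := by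
  simp [powerImages, List.range_succ]

theorem mem_powerImages {Sigma : Type} {α : Equiv.Perm Sigma} {υ : List Sigma} {k : ℕ}
    {x : Sigma} : x ∈ powerImages α υ k ↔ ∃ l < k, ∃ y ∈ υ, (α ^ (l + 1)) y = x := by
  simp [powerImages]

namespace AFMA

variable {Sigma S : Type} {A : AFMA Sigma S} {α β : Equiv.Perm Sigma} {Γ Γ₁ Γ₂ : Set Sigma}
  {C C' C'' C₁ C₂ D : Set (S × Sigma)}

theorem Steps.append {u v : List Sigma} (h : A.Steps C u C') (h' : A.Steps C' v C'') :
    A.Steps C (u ++ v) C'' := by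
  induction h with
  | nil => exact h'
  | cons hs _ ih => exact .cons hs (ih h')

theorem steps_of_trace {w : List Sigma} {Cs : ℕ → Set (S × Sigma)}
    (hstep : ∀ l (h : l < w.length), A.SetStep (Cs l) (w.get ⟨l, h⟩) (Cs (l + 1)))
    {a n : ℕ} (h : a + n ≤ w.length) : A.Steps (Cs a) ((w.drop a).take n) (Cs (a + n)) := by
  induction n generalizing a with
  | zero => exact .nil _
  | succ n ih =>
    have ha : a < w.length := by omega
    rw [List.drop_eq_getElem_cons ha, List.take_succ_cons, show a + (n + 1) = a + 1 + n by omega]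
    exact .cons (hstep a ha) (ih (by omega))

section Registers

theorem register_eq_or_eq_of_mem_muC {c d : S × Sigma} {σ : Sigma} {E : Set (S × Sigma)}
    (hE : E ∈ A.muC c σ) (hd : d ∈ E) : d.2 = c.2 ∨ d.2 = σ ∧ σ ∉ A.Δ := by
  unfold muC at hE
  split_ifs at hE with hΔ hc
  · obtain ⟨Q, -, rfl⟩ := hE
    exact .inl hd.2
  · obtain ⟨Q, -, rfl⟩ := hE
    exact .inl hd.2
  · obtain ⟨p, -, rfl⟩ := hE
    exact hd.imp (·.2) (⟨·.2, hΔ⟩)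

theorem Steps.register_eq_or_mem {w : List Sigma} (h : A.Steps C w C') {c : S × Sigma}
    (hc : c ∈ C') : (∃ d ∈ C, d.2 = c.2) ∨ c.2 ∈ w ∧ c.2 ∉ A.Δ := by
  induction h with
  | nil => exact .inl ⟨c, hc, rfl⟩
  | cons hs _ ih =>
    obtain ⟨g, hg, rfl⟩ := hs
    obtain ⟨d, hd, hdc⟩ | ⟨hcw, hcΔ⟩ := ih hc
    · obtain ⟨b, hb, hdb⟩ := Set.mem_iUnion₂.1 hd
      obtain hreg | ⟨hreg, hΔ⟩ := register_eq_or_eq_of_mem_muC (hg b hb) hdb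
      · exact .inl ⟨b, hb, hreg.symm.trans hdc⟩
      · obtain rfl := hreg.symm.trans hdc
        exact .inr ⟨List.mem_cons_self, hΔ⟩
    · exact .inr ⟨List.mem_cons_of_mem _ hcw, hcΔ⟩

theorem Steps.register_mem_of_initial {w : List Sigma} (h : A.Steps {(A.s0, A.θ0)} w C)
    {c : S × Sigma} (hc : c ∈ C) : (c.2 = A.θ0 ∨ c.2 ∈ w) ∧ c.2 ∉ A.Δ := by
  obtain ⟨_, rfl, hθ⟩ | ⟨hw, hΔ⟩ := h.register_eq_or_mem hc
  · exact ⟨.inl hθ.symm, hθ ▸ A.θ0_notin⟩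
  · exact ⟨.inr hw, hΔ⟩

end Registers

section Simulation

/-- `C` simulates `D` along `α` on input letters from `Γ`: every configuration of `D` has a
counterpart in `C` with the same state whose register passes the test against `y` exactly when the
original passes the test against `α y`, for `y ∈ Γ`. This is `Preceq Δ α D (α '' Γ) C Γ`, stated
configuration by configuration. -/
def Sim (α : Equiv.Perm Sigma) (Γ : Set Sigma) (D C : Set (S × Sigma)) : Prop :=
  ∀ c ∈ D, ∃ x, (c.1, x) ∈ C ∧ ∀ y ∈ Γ, α y = c.2 ↔ y = x

theorem Sim.refl (Γ : Set Sigma) (C : Set (S × Sigma)) : Sim 1 Γ C C :=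
  fun c hc => ⟨c.2, hc, fun _ _ => Iff.rfl⟩

theorem Sim.mono (h : Sim α Γ₂ D C) (hΓ : Γ₁ ⊆ Γ₂) : Sim α Γ₁ D C := fun c hc =>
  have ⟨x, hx, hy⟩ := h c hc
  ⟨x, hx, fun y hyΓ => hy y (hΓ hyΓ)⟩

theorem Sim.mul (h : Sim β Γ₁ D C₁)
    (hα : ∀ c ∈ C₁, c.2 ∈ Γ₁ → ∃ y, α y = c.2 ∧ (c.1, y) ∈ C₂)
    (hS : statesOn C₁ Γ₁ᶜ ⊆ statesOn C₂ Γ₂ᶜ)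
    (hD : ∀ c ∈ D, ∀ y ∈ Γ₂, β (α y) = c.2 → α y ∈ Γ₁) : Sim (β * α) Γ₂ D C₂ := by
  intro c hc
  obtain ⟨x, hx, htest⟩ := h c hc
  by_cases hxΓ : x ∈ Γ₁
  · obtain ⟨z, rfl, hz⟩ := hα _ hx hxΓ
    have hβ : β (α z) = c.2 := (htest _ hxΓ).2 rfl
    exact ⟨z, hz, fun y _ => hβ ▸ (β * α).apply_eq_iff_eq⟩
  · have hcS : c.1 ∈ statesOn C₂ Γ₂ᶜ := hS (Set.mem_biUnion hxΓ hx)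
    obtain ⟨z, hzΓ, hz⟩ := Set.mem_iUnion₂.1 hcS
    refine ⟨z, hz, fun y hy => iff_of_false (fun hyc => ?_) fun hyz => hzΓ (hyz ▸ hy)⟩
    have hyΓ : α y ∈ Γ₁ := hD c hc y hy hyc
    exact hxΓ ((htest _ hyΓ).1 hyc ▸ hyΓ)

theorem Sim.accepting (h : Sim α Γ D C) (hC : A.Accepting C) : A.Accepting D := fun c hc =>
  have ⟨x, hx, _⟩ := h c hc
  hC (c.1, x) hx

theorem exists_mem_muC_apply (hα : IsDeltaPerm A.Δ α) {s : S} {θ x σ : Sigma}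
    (hθ : α σ = θ ↔ σ = x) {E : Set (S × Sigma)} (hE : E ∈ A.muC (s, x) σ) :
    ∃ E' ∈ A.muC (s, θ) (α σ),
      ∀ c ∈ E', c.2 = θ ∧ (c.1, x) ∈ E ∨ c.2 = α σ ∧ (c.1, σ) ∈ E := by
  unfold muC at hE ⊢
  split_ifs at hE with hΔ hx
  · obtain ⟨Q, hQ, rfl⟩ := hE
    rw [if_pos (hα.apply_mem_iff_s13.2 hΔ), hα σ hΔ]
    exact ⟨_, ⟨Q, hQ, rfl⟩, fun c hc => .inl ⟨hc.2, hc.1, rfl⟩⟩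
  · obtain ⟨Q, hQ, rfl⟩ := hE
    rw [if_neg (mt hα.apply_mem_iff_s13.1 hΔ), if_pos (hθ.2 hx)]
    exact ⟨_, ⟨Q, hQ, rfl⟩, fun c hc => .inl ⟨hc.2, hc.1, rfl⟩⟩
  · obtain ⟨p, hp, rfl⟩ := hE
    rw [if_neg (mt hα.apply_mem_iff_s13.1 hΔ), if_neg (mt hθ.1 hx)]
    refine ⟨_, ⟨p, hp, rfl⟩, fun c hc => hc.imp ?_ ?_⟩
    · exact fun h => ⟨h.2, .inl ⟨h.1, rfl⟩⟩
    · exact fun h => ⟨h.2, .inr ⟨h.1, rfl⟩⟩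

theorem Sim.setStep (hα : IsDeltaPerm A.Δ α) (h : Sim α Γ D C) {σ : Sigma} (hσ : σ ∈ Γ)
    (hs : A.SetStep C σ C') : ∃ D', A.SetStep D (α σ) D' ∧ Sim α Γ D' C' := by
  obtain ⟨g, hg, rfl⟩ := hs
  have hstep (c : S × Sigma) : ∃ E, c ∈ D →
      E ∈ A.muC c (α σ) ∧ Sim α Γ E (⋃ c ∈ C, g c) := by
    by_cases hc : c ∈ D
    swap
    · exact ⟨∅, fun h => absurd h hc⟩
    obtain ⟨x, hx, htest⟩ := h c hc
    obtain ⟨E, hE, hmem⟩ := exists_mem_muC_apply hα (htest σ hσ) (hg _ hx)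
    refine ⟨E, fun _ => ⟨hE, fun d hd => ?_⟩⟩
    obtain ⟨hdc, hdx⟩ | ⟨hdσ, hdx⟩ := hmem d hd
    · exact ⟨x, Set.mem_biUnion hx hdx, hdc ▸ htest⟩
    · exact ⟨σ, Set.mem_biUnion hx hdx, fun y _ => hdσ ▸ α.apply_eq_iff_eq⟩
  choose E hE using hstep
  refine ⟨⋃ c ∈ D, E c, ⟨E, fun c hc => (hE c hc).1, rfl⟩, fun d hd => ?_⟩
  obtain ⟨c, hc, hdc⟩ := Set.mem_iUnion₂.1 hd
  exact (hE c hc).2 d hdc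

theorem Sim.steps (hα : IsDeltaPerm A.Δ α) (h : Sim α Γ D C) {u : List Sigma}
    (hu : ∀ x ∈ u, x ∈ Γ) (hs : A.Steps C u C') :
    ∃ D', A.Steps D (u.map α) D' ∧ Sim α Γ D' C' := by
  induction hs generalizing D with
  | nil => exact ⟨D, .nil _, h⟩
  | cons hs _ ih =>
    rw [List.forall_mem_cons] at hu
    obtain ⟨D₁, hD₁, hsim₁⟩ := h.setStep hα hu.1 hs
    obtain ⟨D₂, hD₂, hsim₂⟩ := ih hsim₁ hu.2
    exact ⟨D₂, .cons hD₁ hD₂, hsim₂⟩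

end Simulation

section Pumping

/-- A `Δ`-permutation suitable for pumping: the configurations of `C₁` with register in `Γ₁` are
`α`-images of configurations of `C₂`, and the orbit of a letter of `T` (meant to contain all letters
in use) never returns to `T` unless its first step lands in `Γ₁` or `Δ`. -/
structure IsPumpingPerm (Δ T : Finset Sigma) (α : Equiv.Perm Sigma)
    (C₁ : Set (S × Sigma)) (Γ₁ : Set Sigma) (C₂ : Set (S × Sigma)) : Prop where
  isDeltaPerm : IsDeltaPerm Δ α
  exists_preimage : ∀ c ∈ C₁, c.2 ∈ Γ₁ → ∃ y, α y = c.2 ∧ (c.1, y) ∈ C₂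
  escaping : ∀ x ∈ T, ∀ n : ℕ, (α ^ (n + 1)) x ∈ T → α x ∈ Γ₁ ∨ α x ∈ Δ

theorem exists_injOn_of_ncard_lettersWith_le [Nonempty Sigma] (hΓ₁ : Γ₁.Finite) (hΓ₂ : Γ₂.Finite)
    (hf : ∀ Q : Set S, Q.Nonempty →
      (lettersWith C₁ Q ∩ Γ₁).ncard ≤ (lettersWith C₂ Q ∩ Γ₂).ncard) :
    ∃ f : Sigma → Sigma, Set.MapsTo f {x ∈ Γ₁ | (statesAt C₁ x).Nonempty} Γ₂ ∧
      Set.InjOn f {x ∈ Γ₁ | (statesAt C₁ x).Nonempty} ∧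
      Set.EqOn (statesAt C₂ ∘ f) (statesAt C₁) {x ∈ Γ₁ | (statesAt C₁ x).Nonempty} := by
  refine exists_injOn_of_encard_fiber_le (hΓ₁.subset (Set.sep_subset _ _)) fun x hx => ?_
  calc _ ≤ (lettersWith C₁ (statesAt C₁ x) ∩ Γ₁).encard :=
        Set.encard_le_encard fun y hy => ⟨hy.2, hy.1.1⟩
    _ ≤ (lettersWith C₂ (statesAt C₁ x) ∩ Γ₂).encard := by
        rw [← (hΓ₁.inter_of_right _).cast_ncard_eq, ← (hΓ₂.inter_of_right _).cast_ncard_eq]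
        exact_mod_cast hf _ hx.2
    _ = _ := by rw [Set.inter_comm]; rfl

theorem exists_isPumpingPerm [Infinite Sigma] {Δ T : Finset Sigma} (hC₁ : ∀ c ∈ C₁, c.2 ∉ Δ)
    (hC₂ : ∀ c ∈ C₂, c.2 ∉ Δ) (hΔ : Δ ⊆ T) (hΓ₁ : Γ₁ ⊆ T) (hΓ₂ : Γ₂ ⊆ T)
    (hf : ∀ Q : Set S, Q.Nonempty →
      (lettersWith C₁ Q ∩ Γ₁).ncard ≤ (lettersWith C₂ Q ∩ Γ₂).ncard) :
    ∃ α, IsPumpingPerm Δ T α C₁ Γ₁ C₂ := by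
  classical
  obtain ⟨f, hmaps, hinj, hstates⟩ := exists_injOn_of_ncard_lettersWith_le
    (T.finite_toSet.subset hΓ₁) (T.finite_toSet.subset hΓ₂) hf
  set M : Set Sigma := {x ∈ Γ₁ | (statesAt C₁ x).Nonempty}
  have hMΔ : ∀ x ∈ M, x ∉ Δ := fun x ⟨_, s, hs⟩ => hC₁ (s, x) hs
  have hfΔ : ∀ x ∈ M, f x ∉ Δ := fun x hx => by
    obtain ⟨s, hs⟩ := hx.2
    exact hC₂ (s, f x) ((hstates hx).ge hs)
  let F : Sigma → Sigma := (Δ : Set Sigma).piecewise id f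
  have hFΔ : Set.EqOn F id Δ := Set.piecewise_eqOn _ _ _
  have hFM : Set.EqOn F f M := fun x hx => Set.piecewise_eq_of_notMem _ _ _ (hMΔ x hx)
  have hFmaps : Set.MapsTo F (M ∪ Δ) T :=
    ((hmaps.mono_right hΓ₂).congr hFM.symm).union (Set.MapsTo.congr hΔ hFΔ.symm)
  have hFinj : Set.InjOn F (M ∪ Δ) := by
    refine (Set.injOn_union (Set.disjoint_left.2 hMΔ)).2
      ⟨hinj.congr hFM.symm, (Set.injOn_id _).congr hFΔ.symm, fun x hx y hy hxy => ?_⟩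
    rw [hFM hx, hFΔ hy] at hxy
    exact hfΔ x hx (hxy ▸ hy)
  obtain ⟨α, hinv, hesc⟩ := exists_perm_leftInvOn_escaping
    (Set.union_subset ((Set.sep_subset _ _).trans hΓ₁) hΔ) hFmaps hFinj
  refine ⟨α, fun δ hδ => ?_, fun c hc hcΓ => ?_, fun x hx n hn => ?_⟩
  · simpa [hFΔ hδ] using hinv (.inr hδ)
  · have hcM : c.2 ∈ M := ⟨hcΓ, c.1, hc⟩
    exact ⟨f c.2, hFM hcM ▸ hinv (.inl hcM), (hstates hcM).ge hc⟩
  · exact (hesc x hx n hn).imp_left (·.1)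

theorem IsPumpingPerm.apply_mem_of_pow_apply_eq_register {T : Finset Sigma} {υ : List Sigma}
    {k : ℕ} {c : S × Sigma} {y : Sigma} (hα : IsPumpingPerm A.Δ T α C₁ Γ₁ C₂)
    (hC₁ : ∀ c ∈ C₁, c.2 ∈ T ∧ c.2 ∉ A.Δ) (hυ : ∀ x ∈ υ, x ∈ T)
    (hD : A.Steps C₁ (powerImages α υ k) D) (hc : c ∈ D) (hy : y ∈ T)
    (hyc : (α ^ k) (α y) = c.2) : α y ∈ Γ₁ := by
  obtain ⟨hcΔ, l, hl, z, hz, hzc⟩ : c.2 ∉ A.Δ ∧ ∃ l ≤ k, ∃ z ∈ T, (α ^ l) z = c.2 := by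
    obtain ⟨d, hd, hdc⟩ | ⟨hcw, hcΔ⟩ := hD.register_eq_or_mem hc
    · exact ⟨hdc ▸ (hC₁ d hd).2, 0, k.zero_le, d.2, (hC₁ d hd).1, hdc⟩
    · obtain ⟨l, hl, z, hz, hzc⟩ := mem_powerImages.1 hcw
      exact ⟨hcΔ, l + 1, hl, z, hυ z hz, hzc⟩
  obtain ⟨n, rfl⟩ := Nat.exists_eq_add_of_le hl
  have hyz : (α ^ (n + 1)) y = z := (α ^ l).injective (by
    rw [hzc, ← hyc, pow_succ, pow_add]; rfl)
  refine (hα.escaping y hy n (hyz ▸ hz)).resolve_right fun hαy => hcΔ ?_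
  rw [← hyc]
  exact (hα.isDeltaPerm.pow _).apply_mem_iff_s13.2 hαy

theorem IsPumpingPerm.exists_steps_powerImages {T : Finset Sigma} {υ : List Sigma}
    (hα : IsPumpingPerm A.Δ T α C₁ Γ₁ C₂) (hS : statesOn C₁ Γ₁ᶜ ⊆ statesOn C₂ Γ₂ᶜ)
    (hC₁ : ∀ c ∈ C₁, c.2 ∈ T ∧ c.2 ∉ A.Δ) (hΓ : Γ₁ ⊆ Γ₂) (hΓ₂ : Γ₂ ⊆ T)
    (hυ : ∀ x ∈ υ, x ∈ Γ₂) (hsteps : A.Steps C₂ υ C₁) (k : ℕ) :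
    ∃ D, A.Steps C₁ (powerImages α υ k) D ∧ Sim (α ^ k) Γ₁ D C₁ := by
  induction k with
  | zero => exact ⟨C₁, .nil _, .refl _ _⟩
  | succ k ih =>
    obtain ⟨D, hD, hsim⟩ := ih
    have hsim₂ : Sim (α ^ (k + 1)) Γ₂ D C₂ := pow_succ α k ▸ hsim.mul hα.exists_preimage hS
      fun c hc y hy => hα.apply_mem_of_pow_apply_eq_register hC₁ (fun x hx => hΓ₂ (hυ x hx)) hD hc
        (hΓ₂ hy)
    obtain ⟨D', hD', hsim'⟩ := hsim₂.steps (hα.isDeltaPerm.pow _) hυ hsteps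
    exact ⟨D', powerImages_succ α υ k ▸ hD.append hD', hsim'.mono hΓ⟩

theorem exists_isDeltaPerm_pumpedWord_mem_lang [Infinite Sigma] {τ υ φ : List Sigma}
    (hτ : A.Steps {(A.s0, A.θ0)} τ C₂) (hυ : A.Steps C₂ υ C₁) (hφ : A.Steps C₁ φ C)
    (hacc : A.Accepting C) (hS : statesOn C₁ {x | x ∈ φ}ᶜ ⊆ statesOn C₂ {x | x ∈ υ ++ φ}ᶜ)
    (hf : ∀ Q : Set S, Q.Nonempty →
      (lettersWith C₁ Q ∩ {x | x ∈ φ}).ncard ≤ (lettersWith C₂ Q ∩ {x | x ∈ υ ++ φ}).ncard) :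
    ∃ α : Equiv.Perm Sigma, IsDeltaPerm A.Δ α ∧ ∀ k, pumpedWord α τ υ φ k ∈ A.Lang := by
  classical
  let T : Finset Sigma := insert A.θ0 (A.Δ ∪ (τ ++ υ ++ φ).toFinset)
  have hΓ : {x | x ∈ φ} ⊆ {x | x ∈ υ ++ φ} := fun x hx => List.mem_append_right υ hx
  have hΓ₂ : {x | x ∈ υ ++ φ} ⊆ (T : Set Sigma) := fun x hx => by simp_all [T]
  have hC₂ : ∀ c ∈ C₂, c.2 ∉ A.Δ := fun c hc => (hτ.register_mem_of_initial hc).2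
  have hC₁ : ∀ c ∈ C₁, c.2 ∈ T ∧ c.2 ∉ A.Δ := fun c hc => by
    obtain ⟨hreg, hΔ⟩ := (hτ.append hυ).register_mem_of_initial hc
    refine ⟨?_, hΔ⟩
    simp only [T, Finset.mem_insert, Finset.mem_union, List.mem_toFinset, List.mem_append] at hreg ⊢
    tauto
  obtain ⟨α, hα⟩ := exists_isPumpingPerm (T := T) (fun c hc => (hC₁ c hc).2) hC₂
    (fun x hx => by simp [T, hx]) (hΓ.trans hΓ₂) hΓ₂ hf
  refine ⟨α, hα.isDeltaPerm, fun k => ?_⟩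
  obtain ⟨D, hD, hsim⟩ := hα.exists_steps_powerImages hS hC₁ hΓ hΓ₂
    (fun _ => List.mem_append_left φ) hυ k
  obtain ⟨D', hD', hsim'⟩ := hsim.steps (hα.isDeltaPerm.pow k) (fun _ => id) hφ
  exact ⟨D', ((hτ.append hυ).append hD).append hD', hsim'.accepting hacc⟩

end Pumping

end AFMA

theorem afma_pumping_of_trace_general {Sigma S : Type} [Infinite Sigma]
    (A : AFMA Sigma S) (w : List Sigma)
    (Cs : ℕ → Set (S × Sigma))
    (h0 : Cs 0 = {(A.s0, A.θ0)})
    (hstep : ∀ l (h : l < w.length),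
      A.SetStep (Cs l) (w.get ⟨l, h⟩) (Cs (l + 1)))
    (hacc : A.Accepting (Cs w.length))
    (i j : ℕ) (hij : i ≤ j) (hjm : j ≤ w.length)
    (hS : AFMA.statesOn (Cs (w.length - i)) {x | x ∈ w.drop (w.length - i)}ᶜ ⊆
      AFMA.statesOn (Cs (w.length - j)) {x | x ∈ w.drop (w.length - j)}ᶜ)
    (hf : ∀ Q : Set S, Q.Nonempty →
      (AFMA.lettersWith (Cs (w.length - i)) Q ∩
        {x | x ∈ w.drop (w.length - i)}).ncard ≤
      (AFMA.lettersWith (Cs (w.length - j)) Q ∩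
        {x | x ∈ w.drop (w.length - j)}).ncard) :
    ∃ α : Equiv.Perm Sigma, IsDeltaPerm A.Δ α ∧
      ∀ k : ℕ,
        pumpedWord α (w.take (w.length - j)) ((w.drop (w.length - j)).take (j - i))
          (w.drop (w.length - i)) k ∈ A.Lang := by
  have hi : w.length - j + (j - i) = w.length - i := by omega
  have hτ : A.Steps {(A.s0, A.θ0)} (w.take (w.length - j)) (Cs (w.length - j)) := by
    simpa [h0] using AFMA.steps_of_trace hstep (a := 0) (n := w.length - j) (by omega)
  have hυ : A.Steps (Cs (w.length - j)) ((w.drop (w.length - j)).take (j - i))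
      (Cs (w.length - i)) :=
    hi ▸ AFMA.steps_of_trace hstep (by omega)
  have hφ : A.Steps (Cs (w.length - i)) (w.drop (w.length - i)) (Cs w.length) := by
    have h := AFMA.steps_of_trace hstep (a := w.length - i) (n := i) (by omega)
    rwa [Nat.sub_add_cancel (hij.trans hjm), List.take_of_length_le (by simp; omega)] at h
  have hsplit : w.drop (w.length - j) =
      (w.drop (w.length - j)).take (j - i) ++ w.drop (w.length - i) := by
    rw [← hi, ← List.drop_drop, List.take_append_drop]
  rw [hsplit] at hS hf
  exact AFMA.exists_isDeltaPerm_pumpedWord_mem_lang hτ hυ hφ hacc hS hf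

/-- Corollary (trace form of the sufficient condition): if `w ∈ L(A)` via an
accepting run `Cs` and there are `i < j ≤ m = |w|` with
`S_{w,C,i} = S_{w,C,j}` and `f_{w,C,i}(Q) ≤ f_{w,C,j}(Q)` for every nonempty
`Q ⊆ S` (where `Σ_i` is the set of letters of the last `i` letters of `w`,
`S_{w,C,i} = S^{Σ∖Σ_i}(C_{m−i})` and `f_{w,C,i}(Q) = card(Σ^Q(C_{m−i}) ∩ Σ_i)`),
then for `τ = σ1⋯σ_{m−j}`, `υ = σ_{m−j+1}⋯σ_{m−i}`, `φ = σ_{m−i+1}⋯σ_m`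
there is a `Δ`-permutation `α` with
`τ υ α(υ) α²(υ) ⋯ α^k(υ) α^k(φ) ∈ L(A)` for every `k ≥ 1`. -/
theorem afma_pumping_of_trace {Sigma S : Type} [Infinite Sigma] [Fintype S]
    (A : AFMA Sigma S) (w : List Sigma)
    (Cs : ℕ → Set (S × Sigma))
    (h0 : Cs 0 = {(A.s0, A.θ0)})
    (hstep : ∀ l (h : l < w.length),
      A.SetStep (Cs l) (w.get ⟨l, h⟩) (Cs (l + 1)))
    (hacc : A.Accepting (Cs w.length))
    (i j : ℕ) (hij : i < j) (hjm : j ≤ w.length)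
    (hS : AFMA.statesOn (Cs (w.length - i)) {x | x ∈ w.drop (w.length - i)}ᶜ =
      AFMA.statesOn (Cs (w.length - j)) {x | x ∈ w.drop (w.length - j)}ᶜ)
    (hf : ∀ Q : Set S, Q.Nonempty →
      (AFMA.lettersWith (Cs (w.length - i)) Q ∩
        {x | x ∈ w.drop (w.length - i)}).ncard ≤
      (AFMA.lettersWith (Cs (w.length - j)) Q ∩
        {x | x ∈ w.drop (w.length - j)}).ncard) :
    ∃ α : Equiv.Perm Sigma, IsDeltaPerm A.Δ α ∧
      ∀ k : ℕ, 1 ≤ k →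
        pumpedWord α (w.take (w.length - j)) ((w.drop (w.length - j)).take (j - i))
          (w.drop (w.length - i)) k ∈ A.Lang := by
  obtain ⟨α, hα, hk⟩ :=
    afma_pumping_of_trace_general A w Cs h0 hstep hacc i j hij.le hjm hS.le hf
  exact ⟨α, hα, fun k _ => hk k⟩
end
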